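/- arXiv:2506.07780 — 2 statements merged into one kernel-verified Lean document; each statement's English description precedes it below -/
import Mathlib

section
/- Let v : ℝ → ℝ → ℝ be a smooth function of (x,t) with v_x(x,t) ≠ 0 for all (x,t), satisfying the 3rd potential Kupershmidt equation v_t = v_{5x} - 5·v_{xx}v_{4x}/v_x + 5·v_{xx}²v_{xxx}/v_x². Then h := v⁴·v_x^{-2} satisfies h_t = ∂_x[ h_{4x} - 5·h_xh_{xxx}/h - (15/4)·h_{xx}²/h + (65/4)·h_x²h_{xx}/h² - (135/16)·h_x⁴/h³ ] wherever v(x,t) ≠ 0, where ∂_x denotes the partial derivative with respect to x of the bracketed expression. -/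
/-- Total `x`-derivative of a function of `(x, t)`. -/
noncomputable def dx (f : ℝ → ℝ → ℝ) : ℝ → ℝ → ℝ := fun x t => deriv (fun y => f y t) x

/-- Total `t`-derivative of a function of `(x, t)`. -/
noncomputable def dt (f : ℝ → ℝ → ℝ) : ℝ → ℝ → ℝ := fun x t => deriv (fun s => f x s) t

/-- The 3rd potential Kupershmidt equation. -/
def Kup3 (v : ℝ → ℝ → ℝ) : Prop :=
  ∀ x t, dt v x t =
    dx (dx (dx (dx (dx v)))) x t
    - 5 * dx (dx v) x t * dx (dx (dx (dx v))) x t / dx v x t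
    + 5 * (dx (dx v) x t)^2 * dx (dx (dx v)) x t / (dx v x t)^2

/-!
Let `S` be the Schwarzian derivative of `v` in `x`. The 3rd potential Kupershmidt equation is
`v_t = v_x (S_xx + 4 S²)`, and since `S` is invariant under `v ↦ 1/v`, so is the equation. With
`z = 1/v` one has `v⁴ v_x⁻² = z_x⁻²`, so it is enough to treat `h = z_x⁻²` for a solution `z`. Then
`h_t = -2 z_x⁻³ z_xt = -2 z_x⁻³ ∂_x (z_x (S_xx + 4 S²))`. In terms of `β = z_xx / z_x`, which
satisfies the Riccati equation `β_x = S + β²/2`, the bracket is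
`h (-2 S_xx - 6 β S_x - 5 S² - 9 β² S - (9/4) β⁴)`, and `h_x = -2 β h` shows that its `x`-derivative
is that same expression.
-/

open Set Filter Topology Function
open scoped ContDiff

section Schwarzian

variable {𝕜 : Type*} [NontriviallyNormedField 𝕜] {U : Set 𝕜} {f g : 𝕜 → 𝕜} {x : 𝕜}

/-- The Schwarzian derivative `(f''/f')' - (f''/f')²/2`, written with the logarithmic derivative of
`f'` so that its definition reads as a Riccati equation for `f''/f'`. -/
noncomputable def schwarzian (f : 𝕜 → 𝕜) (x : 𝕜) : 𝕜 :=
  deriv (logDeriv (deriv f)) x - logDeriv (deriv f) x ^ 2 / 2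

/-- The right-hand side of the 3rd potential Kupershmidt equation, as an operator on functions of
`x` alone. -/
noncomputable def kup3Field (f : 𝕜 → 𝕜) (x : 𝕜) : 𝕜 :=
  deriv^[5] f x - 5 * deriv^[2] f x * deriv^[4] f x / deriv f x
    + 5 * deriv^[2] f x ^ 2 * deriv^[3] f x / deriv f x ^ 2

/-- The right-hand side of the 2nd potential Kupershmidt equation in terms of `h = u_x`, as an
operator on functions of `x` alone; its `x`-derivative is the right-hand side of the equation
for `h`. -/
noncomputable def kup2Flux (h : 𝕜 → 𝕜) (x : 𝕜) : 𝕜 :=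
  deriv^[4] h x - 5 * deriv h x * deriv^[3] h x / h x - (15 / 4) * deriv^[2] h x ^ 2 / h x
    + (65 / 4) * deriv h x ^ 2 * deriv^[2] h x / h x ^ 2
    - (135 / 16) * deriv h x ^ 4 / h x ^ 3

lemma hasDerivAt_deriv_of_contDiffOn (hU : IsOpen U) (hf : ContDiffOn 𝕜 ∞ f U) (hx : x ∈ U) :
    HasDerivAt f (deriv f x) x :=
  (hf.differentiableOn (by simp)).hasDerivAt (hU.mem_nhds hx)

lemma contDiffOn_deriv (hU : IsOpen U) (hf : ContDiffOn 𝕜 ∞ f U) :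
    ContDiffOn 𝕜 ∞ (deriv f) U :=
  hf.deriv_of_isOpen hU (by simp)

lemma contDiffOn_logDeriv (hU : IsOpen U) (hg : ContDiffOn 𝕜 ∞ g U) (hg0 : ∀ x ∈ U, g x ≠ 0) :
    ContDiffOn 𝕜 ∞ (logDeriv g) U :=
  (contDiffOn_deriv hU hg).div hg hg0

lemma contDiffOn_schwarzian (hU : IsOpen U) (hf : ContDiffOn 𝕜 ∞ f U)
    (hf' : ∀ x ∈ U, deriv f x ≠ 0) : ContDiffOn 𝕜 ∞ (schwarzian f) U :=
  have hβ := contDiffOn_logDeriv hU (contDiffOn_deriv hU hf) hf'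
  (contDiffOn_deriv hU hβ).sub ((hβ.pow 2).div_const 2)

lemma hasDerivAt_logDeriv_deriv (hU : IsOpen U) (hf : ContDiffOn 𝕜 ∞ f U)
    (hf' : ∀ x ∈ U, deriv f x ≠ 0) (hx : x ∈ U) :
    HasDerivAt (logDeriv (deriv f)) (schwarzian f x + logDeriv (deriv f) x ^ 2 / 2) x := by
  have hβ := contDiffOn_logDeriv hU (contDiffOn_deriv hU hf) hf'
  exact (hasDerivAt_deriv_of_contDiffOn hU hβ hx).congr_deriv (sub_add_cancel _ _).symm

lemma hasDerivAt_mul_logDeriv (hg : DifferentiableAt 𝕜 g x) (hgx : g x ≠ 0) :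
    HasDerivAt g (g x * logDeriv g x) x :=
  hg.hasDerivAt.congr_deriv (mul_div_cancel₀ _ hgx).symm

lemma hasDerivAt_zpow_mul_logDeriv (hg : DifferentiableAt 𝕜 g x) (hgx : g x ≠ 0) (n : ℤ) :
    HasDerivAt (fun y => g y ^ n) (g x ^ n * (n * logDeriv g x)) x := by
  rw [← logDeriv_fun_zpow hg]
  exact hasDerivAt_mul_logDeriv (hg.zpow (.inl hgx)) (zpow_ne_zero n hgx)

lemma deriv_eq_of_eqOn_mul {G P : 𝕜 → 𝕜} {w P' : 𝕜} (hU : IsOpen U) (hx : x ∈ U)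
    (hg : HasDerivAt g (g x * w) x) (hP : HasDerivAt P P' x)
    (hG : EqOn G (fun y => g y * P y) U) : deriv G x = g x * (w * P x + P') :=
  (hG.deriv hU hx).trans ((hg.fun_mul hP).congr_deriv (by ring)).deriv

lemma kup2Flux_eqOn (hU : IsOpen U) (hfg : EqOn f g U) : EqOn (kup2Flux f) (kup2Flux g) U := by
  intro x hx
  have h1 := hfg.deriv hU
  have h2 : EqOn (deriv^[2] f) (deriv^[2] g) U := h1.deriv hU
  have h3 : EqOn (deriv^[3] f) (deriv^[3] g) U := h2.deriv hU
  have h4 : EqOn (deriv^[4] f) (deriv^[4] g) U := h3.deriv hU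
  rw [kup2Flux, kup2Flux, hfg hx, h1 hx, h2 hx, h3 hx, h4 hx]

lemma logDeriv_deriv_inv (hU : IsOpen U) (hf : ContDiffOn 𝕜 ∞ f U) (hf0 : ∀ x ∈ U, f x ≠ 0)
    (hx : x ∈ U) (hf'x : deriv f x ≠ 0) :
    logDeriv (deriv f⁻¹) x = logDeriv (deriv f) x - 2 * logDeriv f x := by
  have hf0x := hf0 x hx
  have hfx := hasDerivAt_deriv_of_contDiffOn hU hf hx
  have hf1 := hasDerivAt_deriv_of_contDiffOn hU (contDiffOn_deriv hU hf) hx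
  have hinv : EqOn (deriv f⁻¹) (fun y => -deriv f y / f y ^ 2) U := fun y hy =>
    ((hasDerivAt_deriv_of_contDiffOn hU hf hy).inv (hf0 y hy)).deriv
  have hinv2 := (hinv.deriv hU hx).trans
    (hf1.fun_neg.fun_div (hfx.fun_pow 2) (pow_ne_zero 2 hf0x)).deriv
  simp only [logDeriv_apply]
  rw [hinv2, hinv hx]
  field_simp
  push_cast
  ring

variable [CharZero 𝕜]

/- The model case is `g = (f')ᶜ`, with `β = f''/f'` and `σ` the Schwarzian derivative of `f`. The
Riccati equation makes every derivative of `g` equal to `g` times a polynomial in `β` and the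
derivatives of `σ`. -/
section Riccati

variable {β σ : 𝕜 → 𝕜} {c : 𝕜}

lemma iterate_deriv_two_of_riccati (hU : IsOpen U)
    (hg : ∀ x ∈ U, HasDerivAt g (g x * (c * β x)) x)
    (hβ : ∀ x ∈ U, HasDerivAt β (σ x + β x ^ 2 / 2) x) (hx : x ∈ U) :
    deriv^[2] g x = g x * (c * σ x + c * (2 * c + 1) / 2 * β x ^ 2) := by
  have hstep := deriv_eq_of_eqOn_mul hU hx (hg x hx) ((hβ x hx).const_mul c)
    fun y hy => (hg y hy).deriv
  refine hstep.trans ?_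
  ring

lemma iterate_deriv_three_of_riccati (hU : IsOpen U)
    (hg : ∀ x ∈ U, HasDerivAt g (g x * (c * β x)) x)
    (hβ : ∀ x ∈ U, HasDerivAt β (σ x + β x ^ 2 / 2) x)
    (hσ : ContDiffOn 𝕜 ∞ σ U) (hx : x ∈ U) :
    deriv^[3] g x = g x * (c * deriv σ x + c * (3 * c + 1) * (β x * σ x)
      + c * (c + 1) * (2 * c + 1) / 2 * β x ^ 3) := by
  have hσ0 := hasDerivAt_deriv_of_contDiffOn hU hσ hx
  have hstep := deriv_eq_of_eqOn_mul hU hx (hg x hx)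
    ((hσ0.const_mul c).fun_add (((hβ x hx).fun_pow 2).const_mul (c * (2 * c + 1) / 2)))
    fun y hy => iterate_deriv_two_of_riccati hU hg hβ hy
  refine hstep.trans ?_
  push_cast
  ring

lemma iterate_deriv_four_of_riccati (hU : IsOpen U)
    (hg : ∀ x ∈ U, HasDerivAt g (g x * (c * β x)) x)
    (hβ : ∀ x ∈ U, HasDerivAt β (σ x + β x ^ 2 / 2) x)
    (hσ : ContDiffOn 𝕜 ∞ σ U) (hx : x ∈ U) :
    deriv^[4] g x = g x * (c * deriv^[2] σ x + c * (4 * c + 1) * (β x * deriv σ x)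
      + c * (3 * c + 1) * σ x ^ 2 + c * (2 * c + 1) * (3 * c + 2) * (β x ^ 2 * σ x)
      + c * (c + 1) * (2 * c + 1) * (2 * c + 3) / 4 * β x ^ 4) := by
  have hσ0 := hasDerivAt_deriv_of_contDiffOn hU hσ hx
  have hσ1 := hasDerivAt_deriv_of_contDiffOn hU (contDiffOn_deriv hU hσ) hx
  have hstep := deriv_eq_of_eqOn_mul hU hx (hg x hx)
    (((hσ1.const_mul c).fun_add (((hβ x hx).fun_mul hσ0).const_mul (c * (3 * c + 1)))).fun_add
      (((hβ x hx).fun_pow 3).const_mul (c * (c + 1) * (2 * c + 1) / 2)))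
    fun y hy => iterate_deriv_three_of_riccati hU hg hβ hσ hy
  refine hstep.trans ?_
  simp only [iterate_succ, iterate_zero, comp_apply, id_eq]
  push_cast
  ring

lemma kup2Flux_of_riccati (hU : IsOpen U)
    (hg : ∀ x ∈ U, HasDerivAt g (g x * (-2 * β x)) x)
    (hβ : ∀ x ∈ U, HasDerivAt β (σ x + β x ^ 2 / 2) x)
    (hσ : ContDiffOn 𝕜 ∞ σ U) (hx : x ∈ U) (hgx : g x ≠ 0) :
    kup2Flux g x = g x * (-2 * deriv^[2] σ x - 6 * (β x * deriv σ x) - 5 * σ x ^ 2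
      - 9 * (β x ^ 2 * σ x) - 9 / 4 * β x ^ 4) := by
  rw [kup2Flux, (hg x hx).deriv, iterate_deriv_two_of_riccati hU hg hβ hx,
    iterate_deriv_three_of_riccati hU hg hβ hσ hx, iterate_deriv_four_of_riccati hU hg hβ hσ hx]
  field_simp
  ring

lemma deriv_kup2Flux_of_riccati (hU : IsOpen U) (hg0 : ∀ x ∈ U, g x ≠ 0)
    (hg : ∀ x ∈ U, HasDerivAt g (g x * (-2 * β x)) x)
    (hβ : ∀ x ∈ U, HasDerivAt β (σ x + β x ^ 2 / 2) x)
    (hσ : ContDiffOn 𝕜 ∞ σ U) (hx : x ∈ U) :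
    deriv (kup2Flux g) x = -2 * g x * (β x * (deriv^[2] σ x + 4 * σ x ^ 2)
      + (deriv^[3] σ x + 8 * σ x * deriv σ x)) := by
  have hβx := hβ x hx
  have hσ0 := hasDerivAt_deriv_of_contDiffOn hU hσ hx
  have hσ1 := hasDerivAt_deriv_of_contDiffOn hU (contDiffOn_deriv hU hσ) hx
  have hσ2 := hasDerivAt_deriv_of_contDiffOn hU (contDiffOn_deriv hU (contDiffOn_deriv hU hσ)) hx
  have hstep := deriv_eq_of_eqOn_mul hU hx (hg x hx)
    (((((hσ2.const_mul (-2)).fun_sub ((hβx.fun_mul hσ1).const_mul 6)).fun_sub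
      ((hσ0.fun_pow 2).const_mul 5)).fun_sub (((hβx.fun_pow 2).fun_mul hσ0).const_mul 9)).fun_sub
      ((hβx.fun_pow 4).const_mul (9 / 4)))
    fun y hy => kup2Flux_of_riccati hU hg hβ hσ hy (hg0 y hy)
  refine hstep.trans ?_
  simp only [iterate_succ, iterate_zero, comp_apply, id_eq]
  push_cast
  ring

end Riccati

lemma kup3Field_eq_schwarzian (hU : IsOpen U) (hf : ContDiffOn 𝕜 ∞ f U)
    (hf' : ∀ x ∈ U, deriv f x ≠ 0) (hx : x ∈ U) :
    kup3Field f x = deriv f x * (deriv^[2] (schwarzian f) x + 4 * schwarzian f x ^ 2) := by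
  have hf'x := hf' x hx
  have hg : ∀ y ∈ U, HasDerivAt (deriv f) (deriv f y * (1 * logDeriv (deriv f) y)) y :=
    fun y hy => by
      have hf1 := hasDerivAt_deriv_of_contDiffOn hU (contDiffOn_deriv hU hf) hy
      simpa only [one_mul] using hasDerivAt_mul_logDeriv hf1.differentiableAt (hf' y hy)
  have hβ := fun y (hy : y ∈ U) => hasDerivAt_logDeriv_deriv hU hf hf' hy
  have hσ : ContDiffOn 𝕜 ∞ (schwarzian f) U := contDiffOn_schwarzian hU hf hf'
  have hf2 : deriv^[2] f x = _ := (hg x hx).deriv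
  have hf3 : deriv^[3] f x = _ := iterate_deriv_two_of_riccati hU hg hβ hx
  have hf4 : deriv^[4] f x = _ := iterate_deriv_three_of_riccati hU hg hβ hσ hx
  have hf5 : deriv^[5] f x = _ := iterate_deriv_four_of_riccati hU hg hβ hσ hx
  rw [kup3Field, hf2, hf3, hf4, hf5]
  field_simp
  ring

lemma deriv_kup3Field (hU : IsOpen U) (hf : ContDiffOn 𝕜 ∞ f U)
    (hf' : ∀ x ∈ U, deriv f x ≠ 0) (hx : x ∈ U) :
    deriv (kup3Field f) x = deriv f x * (logDeriv (deriv f) x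
      * (deriv^[2] (schwarzian f) x + 4 * schwarzian f x ^ 2)
      + (deriv^[3] (schwarzian f) x + 8 * schwarzian f x * deriv (schwarzian f) x)) := by
  have hσ := contDiffOn_schwarzian hU hf hf'
  have hσ0 := hasDerivAt_deriv_of_contDiffOn hU hσ hx
  have hσ2 := hasDerivAt_deriv_of_contDiffOn hU (contDiffOn_deriv hU (contDiffOn_deriv hU hσ)) hx
  have hf1 := hasDerivAt_deriv_of_contDiffOn hU (contDiffOn_deriv hU hf) hx
  have hstep := deriv_eq_of_eqOn_mul hU hx
    (hasDerivAt_mul_logDeriv hf1.differentiableAt (hf' x hx))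
    (hσ2.fun_add ((hσ0.fun_pow 2).const_mul 4))
    fun y hy => kup3Field_eq_schwarzian hU hf hf' hy
  refine hstep.trans ?_
  simp only [iterate_succ, iterate_zero, comp_apply, id_eq]
  push_cast
  ring

lemma deriv_kup2Flux_deriv_zpow_neg_two (hU : IsOpen U) (hf : ContDiffOn 𝕜 ∞ f U)
    (hf' : ∀ x ∈ U, deriv f x ≠ 0) (hx : x ∈ U) :
    deriv (kup2Flux fun y => deriv f y ^ (-2 : ℤ)) x =
      -2 * deriv f x ^ (-3 : ℤ) * deriv (kup3Field f) x := by
  have hg : ∀ y ∈ U, HasDerivAt (fun y => deriv f y ^ (-2 : ℤ))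
      (deriv f y ^ (-2 : ℤ) * (-2 * logDeriv (deriv f) y)) y := fun y hy => by
    have hf1 := hasDerivAt_deriv_of_contDiffOn hU (contDiffOn_deriv hU hf) hy
    exact_mod_cast hasDerivAt_zpow_mul_logDeriv hf1.differentiableAt (hf' y hy) (-2)
  rw [deriv_kup2Flux_of_riccati hU (fun y hy => zpow_ne_zero _ (hf' y hy)) hg
    (fun y hy => hasDerivAt_logDeriv_deriv hU hf hf' hy) (contDiffOn_schwarzian hU hf hf') hx,
    deriv_kup3Field hU hf hf' hx, show (-2 : ℤ) = -3 + 1 by norm_num, zpow_add_one₀ (hf' x hx)]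
  ring

lemma schwarzian_inv (hU : IsOpen U) (hf : ContDiffOn 𝕜 ∞ f U) (hf0 : ∀ x ∈ U, f x ≠ 0)
    (hf' : ∀ x ∈ U, deriv f x ≠ 0) : EqOn (schwarzian f⁻¹) (schwarzian f) U := by
  intro x hx
  have hβinv : EqOn (logDeriv (deriv f⁻¹))
      (fun y => logDeriv (deriv f) y - 2 * logDeriv f y) U := fun y hy =>
    logDeriv_deriv_inv hU hf hf0 hy (hf' y hy)
  have hα : HasDerivAt (logDeriv f) (logDeriv f x * logDeriv (deriv f) x - logDeriv f x ^ 2) x := by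
    have hfx := hasDerivAt_deriv_of_contDiffOn hU hf hx
    have hf1 := hasDerivAt_deriv_of_contDiffOn hU (contDiffOn_deriv hU hf) hx
    have hf0x := hf0 x hx
    have hf'x := hf' x hx
    refine (hf1.div hfx hf0x).congr_deriv ?_
    simp only [logDeriv_apply]
    field_simp
  have hβ := hasDerivAt_logDeriv_deriv hU hf hf' hx
  rw [schwarzian, hβinv hx, hβinv.deriv hU hx, (hβ.fun_sub (hα.const_mul 2)).deriv]
  ring

lemma kup3Field_inv (hU : IsOpen U) (hf : ContDiffOn 𝕜 ∞ f U) (hf0 : ∀ x ∈ U, f x ≠ 0)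
    (hf' : ∀ x ∈ U, deriv f x ≠ 0) (hx : x ∈ U) :
    kup3Field f⁻¹ x = -kup3Field f x / f x ^ 2 := by
  have hderiv : ∀ y ∈ U, deriv f⁻¹ y = -deriv f y / f y ^ 2 := fun y hy =>
    ((hasDerivAt_deriv_of_contDiffOn hU hf hy).inv (hf0 y hy)).deriv
  have hderiv0 : ∀ y ∈ U, deriv f⁻¹ y ≠ 0 := fun y hy => by
    rw [hderiv y hy]
    exact div_ne_zero (neg_ne_zero.2 (hf' y hy)) (pow_ne_zero 2 (hf0 y hy))
  have hS := schwarzian_inv hU hf hf0 hf'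
  have hS2 : deriv^[2] (schwarzian f⁻¹) x = deriv^[2] (schwarzian f) x :=
    (hS.deriv hU).deriv hU hx
  rw [kup3Field_eq_schwarzian hU (hf.inv hf0) hderiv0 hx, kup3Field_eq_schwarzian hU hf hf' hx,
    hS2, hS hx, hderiv x hx]
  ring

end Schwarzian

section PartialDerivatives

variable {E : Type*} [NormedAddCommGroup E] [NormedSpace ℝ E] {x t : ℝ}

lemma hasDerivAt_comp_prodMk_left {F : ℝ × ℝ → E} {F' : ℝ × ℝ →L[ℝ] E}
    (hF : HasFDerivAt F F' (x, t)) : HasDerivAt (fun y => F (y, t)) (F' (1, 0)) x :=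
  hF.comp_hasDerivAt x ((hasDerivAt_id x).prodMk (hasDerivAt_const x t))

lemma hasDerivAt_comp_prodMk_right {F : ℝ × ℝ → E} {F' : ℝ × ℝ →L[ℝ] E}
    (hF : HasFDerivAt F F' (x, t)) : HasDerivAt (fun s => F (x, s)) (F' (0, 1)) t :=
  hF.comp_hasDerivAt t ((hasDerivAt_const t x).prodMk (hasDerivAt_id t))

variable {f : ℝ → ℝ → ℝ}

lemma dx_eq_fderiv (hf : DifferentiableAt ℝ (uncurry f) (x, t)) :
    dx f x t = fderiv ℝ (uncurry f) (x, t) (1, 0) :=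
  (hasDerivAt_comp_prodMk_left hf.hasFDerivAt).deriv

lemma dt_eq_fderiv (hf : DifferentiableAt ℝ (uncurry f) (x, t)) :
    dt f x t = fderiv ℝ (uncurry f) (x, t) (0, 1) :=
  (hasDerivAt_comp_prodMk_right hf.hasFDerivAt).deriv

lemma dx_inv (hf : DifferentiableAt ℝ (uncurry f) (x, t)) (hf0 : f x t ≠ 0) :
    dx (fun y s => (f y s)⁻¹) x t = -dx f x t / f x t ^ 2 :=
  deriv_fun_inv'' (hasDerivAt_comp_prodMk_left hf.hasFDerivAt).differentiableAt hf0

lemma dt_inv (hf : DifferentiableAt ℝ (uncurry f) (x, t)) (hf0 : f x t ≠ 0) :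
    dt (fun y s => (f y s)⁻¹) x t = -dt f x t / f x t ^ 2 :=
  deriv_fun_inv'' (hasDerivAt_comp_prodMk_right hf.hasFDerivAt).differentiableAt hf0

lemma hasDerivAt_dx_right (hf : ContDiffAt ℝ 2 (uncurry f) (x, t)) :
    HasDerivAt (fun s => dx f x s) (dx (dt f) x t) t := by
  set F := uncurry f
  have hF' : HasFDerivAt (fderiv ℝ F) (fderiv ℝ (fderiv ℝ F) (x, t)) (x, t) :=
    ((hf.fderiv_right (m := 1) (by norm_num)).differentiableAt (by simp)).hasFDerivAt
  have hdiff : ∀ᶠ p in 𝓝 (x, t), DifferentiableAt ℝ F p :=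
    (hf.eventually (by simp)).mono fun p hp => hp.differentiableAt (by simp)
  have hdx : (fun s => dx f x s) =ᶠ[𝓝 t] fun s => fderiv ℝ F (x, s) (1, 0) :=
    ((Continuous.prodMk_right x).continuousAt.eventually hdiff).mono fun s hs => dx_eq_fderiv hs
  have hdt : (fun y => dt f y t) =ᶠ[𝓝 x] fun y => fderiv ℝ F (y, t) (0, 1) :=
    ((Continuous.prodMk_left t).continuousAt.eventually hdiff).mono fun y hy => dt_eq_fderiv hy
  have hdxt : dx (dt f) x t = fderiv ℝ (fderiv ℝ F) (x, t) (1, 0) (0, 1) :=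
    (((hasDerivAt_comp_prodMk_left hF').clm_apply
      (hasDerivAt_const x (0, 1))).congr_of_eventuallyEq hdt).deriv.trans (by simp)
  have hsymm : IsSymmSndFDerivAt ℝ F (x, t) := hf.isSymmSndFDerivAt (by simp)
  rw [hdxt, hsymm.eq]
  exact (((hasDerivAt_comp_prodMk_right hF').clm_apply
    (hasDerivAt_const t (1, 0))).congr_of_eventuallyEq hdx).congr_deriv (by simp)

end PartialDerivatives

/-- Local solutions of the 3rd potential Kupershmidt equation on a region of the `(x, t)`-plane.
`Kup3` asks for the equation everywhere, which the reciprocal of a solution with zeros violates. -/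
structure Kup3On (v : ℝ → ℝ → ℝ) (Ω : Set (ℝ × ℝ)) : Prop where
  contDiffOn : ContDiffOn ℝ ∞ (uncurry v) Ω
  dx_ne_zero : ∀ x t, (x, t) ∈ Ω → dx v x t ≠ 0
  dt_eq : ∀ x t, (x, t) ∈ Ω → dt v x t = kup3Field (fun y => v y t) x

namespace Kup3On

variable {v h : ℝ → ℝ → ℝ} {Ω : Set (ℝ × ℝ)} {x t : ℝ}

lemma contDiffAt (hv : Kup3On v Ω) (hΩ : IsOpen Ω) (hp : (x, t) ∈ Ω) :
    ContDiffAt ℝ ∞ (uncurry v) (x, t) :=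
  hv.contDiffOn.contDiffAt (hΩ.mem_nhds hp)

lemma differentiableAt (hv : Kup3On v Ω) (hΩ : IsOpen Ω) (hp : (x, t) ∈ Ω) :
    DifferentiableAt ℝ (uncurry v) (x, t) :=
  (hv.contDiffAt hΩ hp).differentiableAt (by simp)

lemma contDiffOn_slice (hv : Kup3On v Ω) (t : ℝ) :
    ContDiffOn ℝ ∞ (fun y => v y t) {y | (y, t) ∈ Ω} :=
  hv.contDiffOn.comp (contDiff_prodMk_left t).contDiffOn fun _ hy => hy

theorem inv (hv : Kup3On v Ω) (hΩ : IsOpen Ω) (hv0 : ∀ x t, (x, t) ∈ Ω → v x t ≠ 0) :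
    Kup3On (fun x t => (v x t)⁻¹) Ω where
  contDiffOn := hv.contDiffOn.inv fun p hp => hv0 p.1 p.2 hp
  dx_ne_zero x t hp := by
    rw [dx_inv (hv.differentiableAt hΩ hp) (hv0 x t hp)]
    exact div_ne_zero (neg_ne_zero.2 (hv.dx_ne_zero x t hp)) (pow_ne_zero 2 (hv0 x t hp))
  dt_eq x t hp := by
    rw [dt_inv (hv.differentiableAt hΩ hp) (hv0 x t hp), hv.dt_eq x t hp]
    exact (kup3Field_inv (hΩ.preimage (.prodMk_left t)) (hv.contDiffOn_slice t)
      (fun y hy => hv0 y t hy) (fun y hy => hv.dx_ne_zero y t hy) hp).symm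

theorem first_potentialisation (hv : Kup3On v Ω) (hΩ : IsOpen Ω)
    (hh : ∀ x t, (x, t) ∈ Ω → h x t = dx v x t ^ (-2 : ℤ)) (hp : (x, t) ∈ Ω) :
    dt h x t = deriv (kup2Flux fun y => h y t) x := by
  have hU : IsOpen {y | (y, t) ∈ Ω} := hΩ.preimage (.prodMk_left t)
  have hdxdt : HasDerivAt (fun s => dx v x s) (deriv (kup3Field fun y => v y t) x) t := by
    have hv2 : ContDiffAt ℝ 2 (uncurry v) (x, t) :=
      (hv.contDiffAt hΩ hp).of_le (WithTop.coe_le_coe.2 le_top)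
    refine (hasDerivAt_dx_right hv2).congr_deriv ?_
    exact EqOn.deriv (fun y hy => hv.dt_eq y t hy) hU hp
  have hlhs : dt h x t = -2 * dx v x t ^ (-3 : ℤ) * deriv (kup3Field fun y => v y t) x := by
    have hnhds : {s | (x, s) ∈ Ω} ∈ 𝓝 t := (hΩ.preimage (.prodMk_right x)).mem_nhds hp
    have hpow := (hasDerivAt_zpow (-2) _ (.inl (hv.dx_ne_zero x t hp))).comp t hdxdt
    have hpowEq := eventuallyEq_of_mem hnhds fun s hs => hh x s hs
    refine (hpow.congr_of_eventuallyEq hpowEq).deriv.trans ?_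
    norm_num
  rw [hlhs, (kup2Flux_eqOn hU fun y hy => hh y t hy).deriv hU hp]
  exact (deriv_kup2Flux_deriv_zpow_neg_two hU (hv.contDiffOn_slice t)
    (fun y hy => hv.dx_ne_zero y t hy) hp).symm

end Kup3On

theorem kup3_second_potentialisation_general {v h : ℝ → ℝ → ℝ} {Ω : Set (ℝ × ℝ)} (hΩ : IsOpen Ω)
    (hv : Kup3On v Ω) (hv0 : ∀ x t, (x, t) ∈ Ω → v x t ≠ 0)
    (hh : ∀ x t, (x, t) ∈ Ω → h x t = v x t ^ 4 * dx v x t ^ (-2 : ℤ)) {x t : ℝ}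
    (hp : (x, t) ∈ Ω) :
    dt h x t = deriv (kup2Flux fun y => h y t) x := by
  refine (hv.inv hΩ hv0).first_potentialisation hΩ (fun y s hq => ?_) hp
  rw [hh y s hq, dx_inv (hv.differentiableAt hΩ hq) (hv0 y s hq)]
  have hvq := hv0 y s hq
  have hvxq := hv.dx_ne_zero y s hq
  simp only [zpow_neg]
  field_simp

/-- If `v` solves the 3rd potential Kupershmidt equation, then `h = v⁴·v_x^{-2}` solves
the `x`-differentiated 2nd potential Kupershmidt equation wherever `v ≠ 0`. -/
theorem kup3_second_potentialisation
    (v : ℝ → ℝ → ℝ)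
    (hv : ContDiff ℝ (⊤ : ℕ∞) (fun p : ℝ × ℝ => v p.1 p.2))
    (hvx : ∀ x t, dx v x t ≠ 0)
    (heq : Kup3 v)
    (h : ℝ → ℝ → ℝ)
    (hh : ∀ x t, h x t = (v x t)^4 * (dx v x t) ^ (-2 : ℤ)) :
    ∀ x t, v x t ≠ 0 →
      dt h x t =
      dx (fun x t =>
        dx (dx (dx (dx h))) x t
        - 5 * dx h x t * dx (dx (dx h)) x t / h x t
        - (15/4) * (dx (dx h) x t)^2 / h x t
        + (65/4) * (dx h x t)^2 * dx (dx h) x t / (h x t)^2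
        - (135/16) * (dx h x t)^4 / (h x t)^3) x t := by
  intro x t hvxt
  have hΩ : IsOpen {p : ℝ × ℝ | v p.1 p.2 ≠ 0} := isOpen_ne_fun hv.continuous continuous_const
  have hvΩ : Kup3On v {p | v p.1 p.2 ≠ 0} :=
    ⟨hv.contDiffOn, fun x t _ => hvx x t, fun x t _ => heq x t⟩
  exact kup3_second_potentialisation_general hΩ hvΩ (fun _ _ hp => hp) (fun x t _ => hh x t) hvxt
end

section
/- Let β ≠ 0 be a real constant and let v : ℝ → ℝ → ℝ be a smooth function of (x,t) with v(x,t) ≠ 0 and v_x(x,t) ≠ 0 for all (x,t), satisfying the 3rd potential Kupershmidt equation v_t = v_{5x} - 5·v_{xx}v_{4x}/v_x + 5·v_{xx}²v_{xxx}/v_x². Then h := -(β/6)·v²·v_x^{-2} satisfies h_t = ∂_x[ h_{4x} - 5·h_xh_{xxx}/h - (15/4)·h_{xx}²/h + (65/4)·h_x²h_{xx}/h² - (135/16)·h_x⁴/h³ + (5β/6)·(h_{xx}/h - (7/4)·h_x²/h²) - (5β²/36)·(1/h) ], where ∂_x denotes the partial derivative with respect to x of the bracketed expression. -/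
/-!
The idea is to take logarithmic derivatives twice. With `u = v_x / v`, the equation for `v` reads
`v_t = v F`, where `F` depends only on `u` and its `x`-derivatives; equality of mixed derivatives
of `log v` turns this into the conservation law `u_t = F_x`. Since `h = -(β/6) u⁻²`, it follows that
`h_t = (β/3) u⁻³ F_x`.

To recognise the right-hand side as an `x`-derivative, put `w = u_x / u`. Then `(log u)_x = w` and
`(log h)_x = -2w`, so the `x`-derivatives of `u` and `h` are `u` and `h` times Bell polynomials in
the derivatives of `w` and of `-2w`. After this substitution the fluxes of `u` and `h` are short
polynomials in `w, w_x, w_xx, w_xxx` with coefficients powers of `u`, and differentiating both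
once more, with `u_x = u w`, gives the claim.
-/

section CompleteBell

variable {R : Type*} [CommSemiring R]

/-- The complete exponential Bell polynomial `Bₙ(x₁, …, xₙ)`, which expresses the `n`-th derivative
of `exp g` through the derivatives of `g`. The variables are indexed from `0`: `a i` is `xᵢ₊₁`. -/
def completeBell (a : ℕ → R) : ℕ → R
  | 0 => 1
  | n + 1 => ∑ i : Fin (n + 1), n.choose i * a i * completeBell a (n - i)

theorem completeBell_zero (a : ℕ → R) : completeBell a 0 = 1 := by
  rw [completeBell]

theorem completeBell_succ (a : ℕ → R) (n : ℕ) :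
    completeBell a (n + 1) =
      ∑ i ∈ Finset.range (n + 1), n.choose i * a i * completeBell a (n - i) := by
  rw [completeBell, Finset.sum_range]

theorem completeBell_one (a : ℕ → R) : completeBell a 1 = a 0 := by
  simp [completeBell_succ, completeBell_zero]

theorem completeBell_two (a : ℕ → R) : completeBell a 2 = a 1 + a 0 ^ 2 := by
  simp only [completeBell_succ _ 1, Finset.sum_range_succ, Finset.sum_range_zero, Nat.choose,
    Nat.reduceSub, completeBell_one, completeBell_zero]
  push_cast
  ring

theorem completeBell_three (a : ℕ → R) :
    completeBell a 3 = a 2 + 3 * a 0 * a 1 + a 0 ^ 3 := by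
  simp only [completeBell_succ _ 2, Finset.sum_range_succ, Finset.sum_range_zero, Nat.choose,
    Nat.reduceSub, completeBell_two, completeBell_one, completeBell_zero]
  push_cast
  ring

theorem completeBell_four (a : ℕ → R) :
    completeBell a 4 =
      a 3 + 4 * a 0 * a 2 + 3 * a 1 ^ 2 + 6 * a 0 ^ 2 * a 1 + a 0 ^ 4 := by
  simp only [completeBell_succ _ 3, Finset.sum_range_succ, Finset.sum_range_zero, Nat.choose,
    Nat.reduceSub, completeBell_three, completeBell_two, completeBell_one, completeBell_zero]
  push_cast
  ring

theorem completeBell_five (a : ℕ → R) :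
    completeBell a 5 =
      a 4 + 5 * a 0 * a 3 + 10 * a 1 * a 2 + 10 * a 0 ^ 2 * a 2 + 15 * a 0 * a 1 ^ 2
        + 10 * a 0 ^ 3 * a 1 + a 0 ^ 5 := by
  simp only [completeBell_succ _ 4, Finset.sum_range_succ, Finset.sum_range_zero, Nat.choose,
    Nat.reduceSub, completeBell_four, completeBell_three, completeBell_two, completeBell_one,
    completeBell_zero]
  push_cast
  ring

end CompleteBell

section LogDeriv

variable {𝕜 : Type*} [NontriviallyNormedField 𝕜] {f : 𝕜 → 𝕜}

theorem logDeriv_mul_self (hf0 : ∀ x, f x ≠ 0) : logDeriv f * f = deriv f :=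
  funext fun x => div_mul_cancel₀ (deriv f x) (hf0 x)

theorem hasDerivAt_logDeriv_mul_self {x : 𝕜} (hf : DifferentiableAt 𝕜 f x) (hfx : f x ≠ 0) :
    HasDerivAt f (logDeriv f x * f x) x := by
  rw [logDeriv_apply, div_mul_cancel₀ _ hfx]
  exact hf.hasDerivAt

theorem logDeriv_const_mul_zpow {c : 𝕜} (hc : c ≠ 0) (hf : Differentiable 𝕜 f) (k : ℤ) :
    logDeriv (fun x => c * f x ^ k) = fun x => k * logDeriv f x := by
  funext x
  rw [logDeriv_const_mul x c hc, logDeriv_fun_zpow (hf x)]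

theorem contDiff_logDeriv {m n : WithTop ℕ∞} (hf : ContDiff 𝕜 n f) (hf0 : ∀ x, f x ≠ 0)
    (hmn : m + 1 ≤ n) : ContDiff 𝕜 m (logDeriv f) :=
  (hf.of_le hmn).deriv'.div (hf.of_le (le_self_add.trans hmn)) hf0

theorem iteratedDeriv_eq_completeBell_logDeriv {n : ℕ} (hf : ContDiff 𝕜 n f)
    (hf0 : ∀ x, f x ≠ 0) (x : 𝕜) :
    iteratedDeriv n f x = completeBell (fun i => iteratedDeriv i (logDeriv f) x) n * f x := by
  induction n using Nat.strong_induction_on with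
  | _ n ih =>
    cases n with
    | zero => simp [completeBell_zero]
    | succ n =>
      have hlog : ContDiff 𝕜 n (logDeriv f) := contDiff_logDeriv hf hf0 (by norm_cast)
      have hfn : ContDiff 𝕜 n f := hf.of_le (mod_cast n.le_succ)
      rw [iteratedDeriv_succ', ← logDeriv_mul_self hf0,
        iteratedDeriv_mul hlog.contDiffAt hfn.contDiffAt, completeBell_succ, Finset.sum_mul]
      refine Finset.sum_congr rfl fun i _ => ?_
      rw [ih (n - i) (by lia) (hfn.of_le (mod_cast n.sub_le i)), mul_assoc _ _ (f x)]

theorem hasDerivAt_iteratedDeriv {E : Type*} [NormedAddCommGroup E] [NormedSpace 𝕜 E]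
    {g : 𝕜 → E} {n : WithTop ℕ∞} (k : ℕ) (hg : ContDiff 𝕜 n g) (hk : k < n) (x : 𝕜) :
    HasDerivAt (iteratedDeriv k g) (iteratedDeriv (k + 1) g x) x := by
  rw [iteratedDeriv_succ]
  exact (hg.differentiable_iteratedDeriv k hk x).hasDerivAt

end LogDeriv

section Flux

variable {𝕜 : Type*} [NontriviallyNormedField 𝕜]

/-- The right-hand side of the 3rd potential Kupershmidt equation at a fixed time. -/
noncomputable def kup3Rhs (v : 𝕜 → 𝕜) (x : 𝕜) : 𝕜 :=
  iteratedDeriv 5 v x - 5 * iteratedDeriv 2 v x * iteratedDeriv 4 v x / iteratedDeriv 1 v x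
    + 5 * iteratedDeriv 2 v x ^ 2 * iteratedDeriv 3 v x / iteratedDeriv 1 v x ^ 2

/-- The flux `F` of the conservation law `u_t = F_x` satisfied by `u = v_x / v` when `v` solves the
3rd potential Kupershmidt equation. -/
noncomputable def logDerivFlux (u : 𝕜 → 𝕜) (x : 𝕜) : 𝕜 :=
  iteratedDeriv 4 u x - 5 * iteratedDeriv 1 u x * iteratedDeriv 3 u x / u x
    + 5 * iteratedDeriv 1 u x ^ 2 * iteratedDeriv 2 u x / u x ^ 2
    - 5 * u x ^ 2 * iteratedDeriv 2 u x + 5 * u x * iteratedDeriv 1 u x ^ 2 + u x ^ 5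

/-- The right-hand side of the 4th potential Kupershmidt equation at a fixed time, written in
terms of the `x`-derivative `h` of its unknown. -/
noncomputable def kup4Rhs (β : 𝕜) (h : 𝕜 → 𝕜) (x : 𝕜) : 𝕜 :=
  iteratedDeriv 4 h x
    - 5 * iteratedDeriv 1 h x * iteratedDeriv 3 h x / h x
    - (15 / 4) * iteratedDeriv 2 h x ^ 2 / h x
    + (65 / 4) * iteratedDeriv 1 h x ^ 2 * iteratedDeriv 2 h x / h x ^ 2
    - (135 / 16) * iteratedDeriv 1 h x ^ 4 / h x ^ 3
    + (5 * β / 6) * (iteratedDeriv 2 h x / h x - (7 / 4) * iteratedDeriv 1 h x ^ 2 / h x ^ 2)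
    - (5 * β ^ 2 / 36) * (1 / h x)

theorem kup3Rhs_eq_mul_logDerivFlux {v : 𝕜 → 𝕜} (hv : ContDiff 𝕜 5 v) (hv0 : ∀ x, v x ≠ 0)
    {x : 𝕜} (hvx : deriv v x ≠ 0) :
    kup3Rhs v x = v x * logDerivFlux (logDeriv v) x := by
  have hvx0 : v x ≠ 0 := hv0 x
  have hu0 : logDeriv v x ≠ 0 := div_ne_zero hvx hvx0
  have jet (k : ℕ) (hk : (k : WithTop ℕ∞) ≤ 5) :=
    iteratedDeriv_eq_completeBell_logDeriv (hv.of_le hk) hv0 x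
  rw [kup3Rhs, jet 1 (by norm_num), jet 2 (by norm_num), jet 3 (by norm_num), jet 4 (by norm_num),
    jet 5 (by norm_num)]
  simp only [completeBell_one, completeBell_two, completeBell_three, completeBell_four,
    completeBell_five, iteratedDeriv_zero, logDerivFlux]
  field_simp
  ring

theorem logDerivFlux_eq_logDeriv {u : 𝕜 → 𝕜} (hu : ContDiff 𝕜 4 u) (hu0 : ∀ x, u x ≠ 0) (x : 𝕜) :
    let w := logDeriv u
    logDerivFlux u x =
      u x * (iteratedDeriv 3 w x - w x * iteratedDeriv 2 w x + 3 * iteratedDeriv 1 w x ^ 2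
          - 4 * w x ^ 2 * iteratedDeriv 1 w x + w x ^ 4)
        - 5 * u x ^ 3 * iteratedDeriv 1 w x + u x ^ 5 := by
  have hux0 : u x ≠ 0 := hu0 x
  have jet (k : ℕ) (hk : (k : WithTop ℕ∞) ≤ 4) :=
    iteratedDeriv_eq_completeBell_logDeriv (hu.of_le hk) hu0 x
  rw [logDerivFlux, jet 1 (by norm_num), jet 2 (by norm_num), jet 3 (by norm_num),
    jet 4 (by norm_num)]
  simp only [completeBell_one, completeBell_two, completeBell_three, completeBell_four,
    iteratedDeriv_zero]
  field_simp
  ring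

theorem hasDerivAt_logDerivFlux {u : 𝕜 → 𝕜} (hu : ContDiff 𝕜 5 u) (hu0 : ∀ x, u x ≠ 0) (x : 𝕜) :
    let w := logDeriv u
    HasDerivAt (logDerivFlux u)
      (u x * (iteratedDeriv 4 w x + 5 * iteratedDeriv 1 w x * iteratedDeriv 2 w x
          - 5 * w x * iteratedDeriv 1 w x ^ 2 - 5 * w x ^ 2 * iteratedDeriv 2 w x + w x ^ 5)
        - 5 * u x ^ 3 * (iteratedDeriv 2 w x + 3 * w x * iteratedDeriv 1 w x)
        + 5 * u x ^ 5 * w x) x := by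
  intro w
  have hw : ContDiff 𝕜 4 w := contDiff_logDeriv hu hu0 (by norm_num)
  have du : HasDerivAt u (w x * u x) x :=
    hasDerivAt_logDeriv_mul_self (hu.differentiable (by norm_num) x) (hu0 x)
  have dw := hasDerivAt_iteratedDeriv 0 hw (by norm_num) x
  have dw₁ := hasDerivAt_iteratedDeriv 1 hw (by norm_num) x
  have dw₂ := hasDerivAt_iteratedDeriv 2 hw (by norm_num) x
  have dw₃ := hasDerivAt_iteratedDeriv 3 hw (by norm_num) x
  rw [iteratedDeriv_zero] at dw
  rw [funext (logDerivFlux_eq_logDeriv (hu.of_le (by norm_num)) hu0)]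
  refine HasDerivAt.congr_deriv
    (((du.fun_mul ((((dw₃.fun_sub (dw.fun_mul dw₂)).fun_add
    ((dw₁.fun_pow 2).const_mul 3)).fun_sub (((dw.fun_pow 2).const_mul 4).fun_mul dw₁)).fun_add
    (dw.fun_pow 4))).fun_sub (((du.fun_pow 3).const_mul 5).fun_mul dw₁)).fun_add (du.fun_pow 5)) ?_
  push_cast
  ring

variable [CharZero 𝕜] {β : 𝕜} {u : 𝕜 → 𝕜}

theorem kup4Rhs_eq_logDeriv (hβ : β ≠ 0) (hu : ContDiff 𝕜 4 u) (hu0 : ∀ x, u x ≠ 0) (x : 𝕜) :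
    let w := logDeriv u
    kup4Rhs β (fun y => -(β / 6) * u y ^ (-2 : ℤ)) x =
      -(β / 6) *
        ((w x ^ 4 + 2 * w x ^ 2 * iteratedDeriv 1 w x - 3 * iteratedDeriv 1 w x ^ 2
            - 4 * w x * iteratedDeriv 2 w x - 2 * iteratedDeriv 3 w x) / u x ^ 2
          + 10 * iteratedDeriv 1 w x + 15 * w x ^ 2 - 5 * u x ^ 2) := by
  have hux0 : u x ≠ 0 := hu0 x
  have hc : -(β / 6) ≠ 0 := neg_ne_zero.2 (div_ne_zero hβ (by norm_num))
  have hh : ContDiff 𝕜 4 (fun y => -(β / 6) * u y ^ (-2 : ℤ)) := by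
    simp only [zpow_neg, zpow_ofNat]
    exact contDiff_const.mul ((hu.pow 2).inv fun y => pow_ne_zero 2 (hu0 y))
  have hh0 (y : 𝕜) : -(β / 6) * u y ^ (-2 : ℤ) ≠ 0 := mul_ne_zero hc (zpow_ne_zero _ (hu0 y))
  have jet (k : ℕ) (hk : (k : WithTop ℕ∞) ≤ 4) :=
    iteratedDeriv_eq_completeBell_logDeriv (hh.of_le hk) hh0 x
  rw [kup4Rhs, jet 1 (by norm_num), jet 2 (by norm_num), jet 3 (by norm_num), jet 4 (by norm_num),
    logDeriv_const_mul_zpow hc (hu.differentiable (by norm_num))]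
  simp only [completeBell_one, completeBell_two, completeBell_three, completeBell_four,
    iteratedDeriv_const_mul_field, iteratedDeriv_zero, zpow_neg, zpow_ofNat]
  push_cast
  field_simp
  ring

theorem hasDerivAt_kup4Rhs (hβ : β ≠ 0) (hu : ContDiff 𝕜 5 u) (hu0 : ∀ x, u x ≠ 0) (x : 𝕜) :
    let w := logDeriv u
    HasDerivAt (kup4Rhs β fun y => -(β / 6) * u y ^ (-2 : ℤ))
      (-(β / 6) *
        (-2 * (iteratedDeriv 4 w x + 5 * iteratedDeriv 1 w x * iteratedDeriv 2 w x
            - 5 * w x * iteratedDeriv 1 w x ^ 2 - 5 * w x ^ 2 * iteratedDeriv 2 w x + w x ^ 5)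
            / u x ^ 2
          + 10 * (iteratedDeriv 2 w x + 3 * w x * iteratedDeriv 1 w x)
          - 10 * u x ^ 2 * w x)) x := by
  intro w
  have hw : ContDiff 𝕜 4 w := contDiff_logDeriv hu hu0 (by norm_num)
  have hux0 : u x ≠ 0 := hu0 x
  have du : HasDerivAt u (w x * u x) x :=
    hasDerivAt_logDeriv_mul_self (hu.differentiable (by norm_num) x) hux0
  have dw := hasDerivAt_iteratedDeriv 0 hw (by norm_num) x
  have dw₁ := hasDerivAt_iteratedDeriv 1 hw (by norm_num) x
  have dw₂ := hasDerivAt_iteratedDeriv 2 hw (by norm_num) x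
  have dw₃ := hasDerivAt_iteratedDeriv 3 hw (by norm_num) x
  rw [iteratedDeriv_zero] at dw
  rw [funext (kup4Rhs_eq_logDeriv hβ (hu.of_le (by norm_num)) hu0)]
  refine HasDerivAt.congr_deriv
    ((((((((((dw.fun_pow 4).fun_add (((dw.fun_pow 2).const_mul 2).fun_mul dw₁)).fun_sub
    ((dw₁.fun_pow 2).const_mul 3)).fun_sub ((dw.const_mul 4).fun_mul dw₂)).fun_sub
    (dw₃.const_mul 2)).fun_div (du.fun_pow 2) (pow_ne_zero 2 hux0)).fun_add
    (dw₁.const_mul 10)).fun_add ((dw.fun_pow 2).const_mul 15)).fun_sub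
    ((du.fun_pow 2).const_mul 5)).const_mul (-(β / 6))) ?_
  push_cast
  field_simp
  ring

theorem deriv_kup4Rhs_eq_deriv_logDerivFlux (hβ : β ≠ 0) (hu : ContDiff 𝕜 5 u)
    (hu0 : ∀ x, u x ≠ 0) (x : 𝕜) :
    deriv (kup4Rhs β fun y => -(β / 6) * u y ^ (-2 : ℤ)) x =
      β / 3 * u x ^ (-3 : ℤ) * deriv (logDerivFlux u) x := by
  have hux0 : u x ≠ 0 := hu0 x
  rw [(hasDerivAt_kup4Rhs hβ hu hu0 x).deriv, (hasDerivAt_logDerivFlux hu hu0 x).deriv, zpow_neg,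
    zpow_ofNat]
  field_simp
  ring

end Flux

section PartialDerivatives

open Function

variable {f : ℝ → ℝ → ℝ}

theorem dx_iterate_eq_iteratedDeriv (f : ℝ → ℝ → ℝ) (n : ℕ) (x t : ℝ) :
    dx^[n] f x t = iteratedDeriv n (fun y => f y t) x := by
  induction n generalizing f with
  | zero => simp
  | succ n ih => rw [iterate_succ_apply, ih, iteratedDeriv_succ']; rfl

theorem kup3_iff_dt_eq_kup3Rhs {v : ℝ → ℝ → ℝ} :
    Kup3 v ↔ ∀ x t, dt v x t = kup3Rhs (fun y => v y t) x := by
  simp only [kup3Rhs, ← dx_iterate_eq_iteratedDeriv]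
  rfl

theorem hasDerivAt_fst_fderiv_uncurry (hf : Differentiable ℝ (uncurry f)) (x t : ℝ) :
    HasDerivAt (fun y => f y t) (fderiv ℝ (uncurry f) (x, t) (1, 0)) x :=
  (hf (x, t)).hasFDerivAt.comp_hasDerivAt (f := fun y => (y, t)) x
    ((hasDerivAt_id x).prodMk (hasDerivAt_const x t))

theorem hasDerivAt_snd_fderiv_uncurry (hf : Differentiable ℝ (uncurry f)) (x t : ℝ) :
    HasDerivAt (f x) (fderiv ℝ (uncurry f) (x, t) (0, 1)) t :=
  (hf (x, t)).hasFDerivAt.comp_hasDerivAt (f := fun s => (x, s)) t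
    ((hasDerivAt_const t x).prodMk (hasDerivAt_id t))

theorem hasDerivAt_dx (hf : Differentiable ℝ (uncurry f)) (x t : ℝ) :
    HasDerivAt (fun y => f y t) (dx f x t) x :=
  (hasDerivAt_fst_fderiv_uncurry hf x t).differentiableAt.hasDerivAt

theorem hasDerivAt_dt (hf : Differentiable ℝ (uncurry f)) (x t : ℝ) :
    HasDerivAt (f x) (dt f x t) t :=
  (hasDerivAt_snd_fderiv_uncurry hf x t).differentiableAt.hasDerivAt

theorem uncurry_dx (hf : Differentiable ℝ (uncurry f)) :
    uncurry (dx f) = fun p => fderiv ℝ (uncurry f) p (1, 0) :=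
  funext fun p => (hasDerivAt_fst_fderiv_uncurry hf p.1 p.2).deriv

theorem uncurry_dt (hf : Differentiable ℝ (uncurry f)) :
    uncurry (dt f) = fun p => fderiv ℝ (uncurry f) p (0, 1) :=
  funext fun p => (hasDerivAt_snd_fderiv_uncurry hf p.1 p.2).deriv

theorem differentiable_uncurry_dx (hf : ContDiff ℝ 2 (uncurry f)) :
    Differentiable ℝ (uncurry (dx f)) := by
  rw [uncurry_dx (hf.differentiable two_ne_zero)]
  exact ((hf.fderiv_right (m := 1) (by norm_num)).differentiable one_ne_zero).clm_apply
    (differentiable_const _)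

theorem differentiable_uncurry_dt (hf : ContDiff ℝ 2 (uncurry f)) :
    Differentiable ℝ (uncurry (dt f)) := by
  rw [uncurry_dt (hf.differentiable two_ne_zero)]
  exact ((hf.fderiv_right (m := 1) (by norm_num)).differentiable one_ne_zero).clm_apply
    (differentiable_const _)

theorem dt_dx_eq_dx_dt (hf : ContDiff ℝ 2 (uncurry f)) (x t : ℝ) :
    dt (dx f) x t = dx (dt f) x t := by
  have hf1 : Differentiable ℝ (uncurry f) := hf.differentiable two_ne_zero
  have hf2 : DifferentiableAt ℝ (fderiv ℝ (uncurry f)) (x, t) :=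
    (hf.fderiv_right (m := 1) (by norm_num)).differentiable one_ne_zero _
  have hsymm : IsSymmSndFDerivAt ℝ (uncurry f) (x, t) :=
    hf.contDiffAt.isSymmSndFDerivAt (by simp)
  calc dt (dx f) x t
      = fderiv ℝ (uncurry (dx f)) (x, t) (0, 1) :=
        (hasDerivAt_snd_fderiv_uncurry (differentiable_uncurry_dx hf) x t).deriv
    _ = fderiv ℝ (fderiv ℝ (uncurry f)) (x, t) (0, 1) (1, 0) := by
        rw [uncurry_dx hf1, fderiv_clm_apply hf2 (differentiableAt_const _)]
        simp
    _ = fderiv ℝ (fderiv ℝ (uncurry f)) (x, t) (1, 0) (0, 1) := hsymm.eq _ _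
    _ = fderiv ℝ (uncurry (dt f)) (x, t) (1, 0) := by
        rw [uncurry_dt hf1, fderiv_clm_apply hf2 (differentiableAt_const _)]
        simp
    _ = dx (dt f) x t :=
        (hasDerivAt_fst_fderiv_uncurry (differentiable_uncurry_dt hf) x t).deriv.symm

theorem hasDerivAt_logDeriv_slice (hf : ContDiff ℝ 2 (uncurry f)) (hf0 : ∀ x t, f x t ≠ 0)
    (x t : ℝ) :
    HasDerivAt (fun s => logDeriv (fun y => f y s) x) (dx (fun y s => dt f y s / f y s) x t) t := by
  have hf1 : Differentiable ℝ (uncurry f) := hf.differentiable two_ne_zero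
  have hdx : HasDerivAt (fun s => dx f x s / f x s)
      ((dt (dx f) x t * f x t - dx f x t * dt f x t) / f x t ^ 2) t :=
    (hasDerivAt_dt (differentiable_uncurry_dx hf) x t).fun_div (hasDerivAt_dt hf1 x t) (hf0 x t)
  have hdt : HasDerivAt (fun y => dt f y t / f y t)
      ((dx (dt f) x t * f x t - dt f x t * dx f x t) / f x t ^ 2) x :=
    (hasDerivAt_dx (differentiable_uncurry_dt hf) x t).fun_div (hasDerivAt_dx hf1 x t) (hf0 x t)
  rw [dt_dx_eq_dx_dt hf, mul_comm (dx f x t)] at hdx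
  rwa [dx, hdt.deriv]

end PartialDerivatives

theorem Kup3.hasDerivAt_logDeriv {v : ℝ → ℝ → ℝ} (heq : Kup3 v)
    (hv : ContDiff ℝ 2 (Function.uncurry v)) (hv_slice : ∀ t, ContDiff ℝ 5 fun x => v x t)
    (hne : ∀ x t, v x t ≠ 0) (hvx : ∀ x t, dx v x t ≠ 0) (x t : ℝ) :
    HasDerivAt (fun s => logDeriv (fun y => v y s) x)
      (deriv (logDerivFlux (logDeriv fun y => v y t)) x) t := by
  have hflux : (fun y => dt v y t / v y t) = logDerivFlux (logDeriv fun y => v y t) := by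
    funext y
    rw [kup3_iff_dt_eq_kup3Rhs.1 heq,
      kup3Rhs_eq_mul_logDerivFlux (hv_slice t) (hne · t) (hvx y t),
      mul_div_cancel_left₀ _ (hne y t)]
  rw [← hflux]
  exact hasDerivAt_logDeriv_slice hv hne x t

theorem kup3_to_kup4_potentialisation_general
    (β : ℝ) (hβ : β ≠ 0)
    (v : ℝ → ℝ → ℝ)
    (hv : ContDiff ℝ 2 (Function.uncurry v))
    (hv_slice : ∀ t, ContDiff ℝ 6 fun x => v x t)
    (hne : ∀ x t, v x t ≠ 0)
    (hvx : ∀ x t, dx v x t ≠ 0)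
    (heq : Kup3 v)
    (h : ℝ → ℝ → ℝ)
    (hh : ∀ x t, h x t = -(β / 6) * (v x t) ^ 2 * (dx v x t) ^ (-2 : ℤ)) :
    ∀ x t, dt h x t =
      dx (fun x t =>
        dx (dx (dx (dx h))) x t
        - 5 * dx h x t * dx (dx (dx h)) x t / h x t
        - (15 / 4) * (dx (dx h) x t) ^ 2 / h x t
        + (65 / 4) * (dx h x t) ^ 2 * dx (dx h) x t / (h x t) ^ 2
        - (135 / 16) * (dx h x t) ^ 4 / (h x t) ^ 3
        + (5 * β / 6) * (dx (dx h) x t / h x t - (7 / 4) * (dx h x t) ^ 2 / (h x t) ^ 2)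
        - (5 * β ^ 2 / 36) * (1 / h x t)) x t := by
  intro x t
  let u : ℝ → ℝ → ℝ := fun x t => logDeriv (fun y => v y t) x
  have hu (t : ℝ) : ContDiff ℝ 5 fun y => u y t :=
    contDiff_logDeriv (hv_slice t) (hne · t) (by norm_num)
  have hu0 (x t : ℝ) : u x t ≠ 0 := div_ne_zero (hvx x t) (hne x t)
  have hh_u : h = fun x t => -(β / 6) * u x t ^ (-2 : ℤ) := by
    funext x t
    change _ = -(β / 6) * (dx v x t / v x t) ^ (-2 : ℤ)
    rw [hh, div_zpow, zpow_neg (v x t), div_inv_eq_mul, zpow_ofNat]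
    ring
  have hut : HasDerivAt (u x) (deriv (logDerivFlux fun y => u y t) x) t :=
    heq.hasDerivAt_logDeriv hv (fun t => (hv_slice t).of_le (by norm_num)) hne hvx x t
  calc dt h x t
      = β / 3 * u x t ^ (-3 : ℤ) * deriv (logDerivFlux fun y => u y t) x := by
        rw [hh_u]
        refine (((hasDerivAt_zpow (-2) (u x t) (.inl (hu0 x t))).comp t hut).const_mul
          (-(β / 6))).deriv.trans ?_
        push_cast
        ring
    _ = deriv (kup4Rhs β fun y => h y t) x := by
        rw [hh_u, deriv_kup4Rhs_eq_deriv_logDerivFlux hβ (hu t) (hu0 · t)]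
    _ = _ := by
        unfold kup4Rhs
        simp only [← dx_iterate_eq_iteratedDeriv]
        rfl

/-- If `v` solves the 3rd potential Kupershmidt equation, then `h = -(β/6)v²v_x^{-2}`
solves the `x`-differentiated 4th potential Kupershmidt equation. -/
theorem kup3_to_kup4_potentialisation
    (β : ℝ) (hβ : β ≠ 0)
    (v : ℝ → ℝ → ℝ)
    (hv : ContDiff ℝ (⊤ : ℕ∞) (fun p : ℝ × ℝ => v p.1 p.2))
    (hne : ∀ x t, v x t ≠ 0)
    (hvx : ∀ x t, dx v x t ≠ 0)
    (heq : Kup3 v)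
    (h : ℝ → ℝ → ℝ)
    (hh : ∀ x t, h x t = -(β/6) * (v x t)^2 * (dx v x t) ^ (-2 : ℤ)) :
    ∀ x t, dt h x t =
      dx (fun x t =>
        dx (dx (dx (dx h))) x t
        - 5 * dx h x t * dx (dx (dx h)) x t / h x t
        - (15/4) * (dx (dx h) x t)^2 / h x t
        + (65/4) * (dx h x t)^2 * dx (dx h) x t / (h x t)^2
        - (135/16) * (dx h x t)^4 / (h x t)^3
        + (5*β/6) * (dx (dx h) x t / h x t - (7/4) * (dx h x t)^2 / (h x t)^2)
        - (5*β^2/36) * (1 / h x t)) x t := by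
  exact kup3_to_kup4_potentialisation_general β hβ v (contDiff_infty.1 hv 2)
    (fun t => contDiff_infty.1 (hv.comp (contDiff_prodMk_left t)) 6) hne hvx heq h hh
end
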